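/- arXiv:2106.01460 — 2 statements merged into one kernel-verified Lean document; each statement's English description precedes it below -/
import Mathlib

section
/- Let D_1 = D(x_1, a_1) = −Σ_{i=1}^{p−1} (C(p,i)/p)·x_1^i·a_1^{p−i} ∈ K_1. Then v_1(D_1) = −(p^2 − p + 1)·b_1, where b_1 = −v_0(a_1). -/
/-- A normalized discrete valuation on a field `K`, recorded as a function
`v : K → ℤ`.  The value of `v` at `0` is irrelevant: all conditions below only
refer to nonzero elements (the convention `v 0 = ∞` being understood). -/
structure IsDiscVal {K : Type*} [Field K] (v : K → ℤ) : Prop where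
  map_one : v 1 = 0
  map_mul : ∀ x y : K, x ≠ 0 → y ≠ 0 → v (x * y) = v x + v y
  min_le_add : ∀ x y : K, x ≠ 0 → y ≠ 0 → x + y ≠ 0 → min (v x) (v y) ≤ v (x + y)
  exists_uniformizer : ∃ π : K, π ≠ 0 ∧ v π = 1

namespace IsDiscVal

variable {K : Type*} [Field K] {v : K → ℤ}

lemma map_neg_one (hv : IsDiscVal v) : v (-1) = 0 := by
  have h := hv.map_mul (-1) (-1) (by simp) (by simp)
  rw [neg_mul_neg, one_mul, hv.map_one] at h
  omega

lemma map_neg (hv : IsDiscVal v) {x : K} (hx : x ≠ 0) : v (-x) = v x := by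
  rw [← neg_one_mul, hv.map_mul _ _ (by simp) hx, hv.map_neg_one, zero_add]

lemma map_pow (hv : IsDiscVal v) {x : K} (hx : x ≠ 0) (n : ℕ) : v (x ^ n) = n * v x := by
  induction n with
  | zero => simp [hv.map_one]
  | succ n ih =>
    rw [pow_succ, hv.map_mul _ _ (pow_ne_zero n hx) hx, ih]
    push_cast
    ring

lemma le_add (hv : IsDiscVal v) {x y : K} {n : ℤ} (hx : x = 0 ∨ n ≤ v x) (hy : y = 0 ∨ n ≤ v y) :
    x + y = 0 ∨ n ≤ v (x + y) := by
  by_cases hx0 : x = 0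
  · simpa [hx0] using hy
  by_cases hy0 : y = 0
  · simpa [hy0] using hx
  by_cases h : x + y = 0
  · exact Or.inl h
  · exact Or.inr ((le_min (hx.resolve_left hx0) (hy.resolve_left hy0)).trans
      (hv.min_le_add x y hx0 hy0 h))

lemma le_sum (hv : IsDiscVal v) {ι : Type*} (s : Finset ι) (f : ι → K) {n : ℤ}
    (h : ∀ i ∈ s, f i = 0 ∨ n ≤ v (f i)) : ∑ i ∈ s, f i = 0 ∨ n ≤ v (∑ i ∈ s, f i) :=
  Finset.sum_induction f (fun x => x = 0 ∨ n ≤ v x) (fun _ _ => hv.le_add) (Or.inl rfl) h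

lemma natCast_nonneg (hv : IsDiscVal v) (m : ℕ) : (m : K) = 0 ∨ 0 ≤ v m := by
  induction m with
  | zero => simp
  | succ m ih =>
    rw [Nat.cast_succ]
    exact hv.le_add ih (Or.inr hv.map_one.ge)

lemma add_eq_left (hv : IsDiscVal v) {x y : K} (hx : x ≠ 0) (hy : y = 0 ∨ v x < v y) :
    x + y ≠ 0 ∧ v (x + y) = v x := by
  by_cases hy0 : y = 0
  · simp [hy0, hx]
  have hlt := hy.resolve_left hy0
  have hne : x + y ≠ 0 := by
    intro h
    rw [eq_neg_of_add_eq_zero_left h, hv.map_neg hy0] at hlt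
    exact hlt.false
  refine ⟨hne, ?_⟩
  have h1 := hv.min_le_add x y hx hy0 hne
  have h2 := hv.min_le_add (x + y) (-y) hne (neg_ne_zero.2 hy0) (by simpa using hx)
  rw [add_neg_cancel_right, hv.map_neg hy0] at h2
  omega

/-- A root of an Artin–Schreier equation `x ^ p - x = a` with `v a < 0` satisfies
`p * v x = v a`. -/
lemma mul_eq_of_pow_sub_eq (hv : IsDiscVal v) {p : ℕ} (hp : 1 < p) {x a : K} (ha : a ≠ 0)
    (hneg : v a < 0) (h : x ^ p - x = a) : x ≠ 0 ∧ (p : ℤ) * v x = v a := by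
  have hx : x ≠ 0 := by
    rintro rfl
    exact ha (by rw [← h, zero_pow (by omega), sub_zero])
  rw [sub_eq_add_neg] at h
  have hpow := hv.map_pow hx p
  have hvneg := hv.map_neg hx
  have hvx : v x < 0 := by
    by_contra! hvx
    have h0 := hv.le_add (x := x ^ p) (y := -x) (n := 0) (Or.inr (by rw [hpow]; positivity))
      (Or.inr (by rw [hvneg]; exact hvx))
    rw [h] at h0
    exact (h0.resolve_left ha).not_gt hneg
  have hp' : (1 : ℤ) < p := by exact_mod_cast hp
  have := (hv.add_eq_left (pow_ne_zero p hx) (y := -x) (Or.inr (by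
    rw [hpow, hvneg]; nlinarith))).2
  rw [h] at this
  exact ⟨hx, by rw [this, hpow]⟩

end IsDiscVal

/-- the valuation of `D₁ = D(x₁,a₁)` in `K₁ = K₀(x₁)` is
`−(p²−p+1)·b₁`. -/
theorem statement3
    (p : ℕ) (hp : p.Prime)
    (K0 K1 : Type*) [Field K0] [Field K1] [CharZero K0] [CharZero K1]
    [Algebra K0 K1] [IsGalois K0 K1] [FiniteDimensional K0 K1]
    (hdeg : Module.finrank K0 K1 = p)
    (v0 : K0 → ℤ) (v1 : K1 → ℤ)
    (hv0 : IsDiscVal v0) (hv1 : IsDiscVal v1)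
    (e0 : ℤ) (he0 : e0 = v0 (p : K0)) (he0pos : 1 ≤ e0)
    (hram : ∀ x : K0, x ≠ 0 → v1 (algebraMap K0 K1 x) = (p : ℤ) * v0 x)
    (a1 : K0) (ha1 : a1 ≠ 0)
    (hwitt : ∀ y : K0, y ^ p - y ≠ a1)
    (hnd : ¬ ((p : ℤ) ∣ v0 a1))
    (hneg : v0 a1 < 0)
    (hbd : -((p : ℤ) * e0) < ((p : ℤ) ^ 2 - 1) * v0 a1)
    (x1 : K1) (hx1 : x1 ^ p - x1 = algebraMap K0 K1 a1)
    (hgen : Algebra.adjoin K0 {x1} = ⊤)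
    (b1 : ℤ) (hb1 : b1 = -v0 a1) :
    (-∑ i ∈ Finset.Icc 1 (p - 1),
        ((p.choose i : K1) / (p : K1)) * x1 ^ i * (algebraMap K0 K1 a1) ^ (p - i)) ≠ 0 ∧
    v1 (-∑ i ∈ Finset.Icc 1 (p - 1),
        ((p.choose i : K1) / (p : K1)) * x1 ^ i * (algebraMap K0 K1 a1) ^ (p - i)) =
      -(((p : ℤ) ^ 2 - p + 1) * b1) := by
  obtain ⟨hx, hvx⟩ : x1 ≠ 0 ∧ v1 x1 = -b1 := by
    have ha : v1 (algebraMap K0 K1 a1) = p * v0 a1 := hram a1 ha1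
    have hp0 : (0 : ℤ) < p := by exact_mod_cast hp.pos
    obtain ⟨hx, h⟩ := hv1.mul_eq_of_pow_sub_eq hp.one_lt (by simpa using ha1)
      (by rw [ha]; nlinarith) hx1
    refine ⟨hx, ?_⟩
    rw [ha] at h
    rw [hb1, neg_neg]
    exact mul_left_cancel₀ hp0.ne' h
  have hA : algebraMap K0 K1 a1 ≠ 0 := by simpa using ha1
  have hvA : v1 (algebraMap K0 K1 a1) = -(p * b1) := by rw [hram a1 ha1, hb1]; ring
  generalize algebraMap K0 K1 a1 = A at hA hvA
  have hpK : (p : K1) ≠ 0 := by exact_mod_cast hp.ne_zero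
  have hb : 0 < b1 := by omega
  have hp1 : (1 : ℤ) < p := by exact_mod_cast hp.one_lt
  have hmon (i : ℕ) (hi : i ≤ p) :
      v1 (x1 ^ i * A ^ (p - i)) = -((p : ℤ) ^ 2 - (p - 1) * i) * b1 := by
    rw [hv1.map_mul _ _ (pow_ne_zero _ hx) (pow_ne_zero _ hA), hv1.map_pow hx, hv1.map_pow hA,
      hvx, hvA]
    push_cast [hi]
    ring
  have hone : ((p.choose 1 : K1) / (p : K1)) * x1 ^ 1 * A ^ (p - 1) = x1 ^ 1 * A ^ (p - 1) := by
    rw [Nat.choose_one_right, div_self hpK, one_mul]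
  have htail : ∀ i ∈ (Finset.Icc 1 (p - 1)).erase 1,
      ((p.choose i : K1) / (p : K1)) * x1 ^ i * A ^ (p - i) = 0 ∨
        -((p : ℤ) ^ 2 - (p - 1) * 1) * b1 + 1 ≤
          v1 (((p.choose i : K1) / (p : K1)) * x1 ^ i * A ^ (p - i)) := by
    intro i hi
    simp only [Finset.mem_erase, Finset.mem_Icc] at hi
    obtain ⟨c, hc⟩ := hp.dvd_choose_self (k := i) (by omega) (by omega)
    have hcK : (p.choose i : K1) / (p : K1) = c := by
      rw [hc, Nat.cast_mul, mul_div_cancel_left₀ _ hpK]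
    rw [hcK, mul_assoc]
    by_cases hc0 : (c : K1) = 0
    · simp [hc0]
    right
    rw [hv1.map_mul _ _ hc0 (mul_ne_zero (pow_ne_zero _ hx) (pow_ne_zero _ hA)),
      hmon i (by omega)]
    have hcv := (hv1.natCast_nonneg c).resolve_left hc0
    have hi2 : (2 : ℤ) ≤ i := by omega
    nlinarith [mul_pos (mul_pos (by linarith : (0 : ℤ) < p - 1) (by linarith : (0 : ℤ) < i - 1)) hb]
  have hne : x1 ^ 1 * A ^ (p - 1) ≠ 0 := mul_ne_zero (pow_ne_zero _ hx) (pow_ne_zero _ hA)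
  have hmon1 := hmon 1 hp.one_lt.le
  rw [Nat.cast_one] at hmon1
  obtain ⟨hS, hvS⟩ := hv1.add_eq_left hne ((hv1.le_sum _ _ htail).imp_right fun h => by
    rw [hmon1]; omega)
  rw [← Finset.add_sum_erase _ _ (Finset.mem_Icc.2 ⟨le_rfl, by have := hp.two_le; omega⟩ :
    1 ∈ Finset.Icc 1 (p - 1)), hone]
  refine ⟨neg_ne_zero.2 hS, ?_⟩
  rw [hv1.map_neg hS, hvS, hmon1]
  ring
end

section
/- Let y_2 = x_2 − μ·x_1. Then v_2(y_2) = −b_2. -/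
open Classical in
/-- The additive valuation with values in `WithTop ℤ` attached to a normalized discrete valuation. -/
noncomputable def IsDiscVal.toAddValuation {K : Type*} [Field K] {v : K → ℤ} (hv : IsDiscVal v) :
    AddValuation K (WithTop ℤ) :=
  AddValuation.of (fun x => if x = 0 then ⊤ else (v x : WithTop ℤ))
    (by simp) (by simp [hv.map_one])
    (by
      intro x y
      by_cases hx : x = 0
      · simp [hx]
      by_cases hy : y = 0
      · simp [hy]
      by_cases hxy : x + y = 0
      · simp [hxy]
      simp only [hx, hy, hxy, if_false]
      exact_mod_cast hv.min_le_add x y hx hy hxy)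
    (by
      intro x y
      by_cases hx : x = 0
      · simp [hx]
      by_cases hy : y = 0
      · simp [hy]
      simp only [hx, hy, mul_eq_zero, or_self, if_false]
      exact_mod_cast hv.map_mul x y hx hy)

theorem IsDiscVal.toAddValuation_apply {K : Type*} [Field K] {v : K → ℤ} (hv : IsDiscVal v)
    {x : K} (hx : x ≠ 0) : hv.toAddValuation x = v x := by
  simp [IsDiscVal.toAddValuation, AddValuation.of_apply, hx]

namespace AddValuation

variable {K : Type*} [Field K] (w : AddValuation K (WithTop ℤ))

theorem natCast_nonneg (n : ℕ) : 0 ≤ w (n : K) := by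
  induction n with
  | zero => simp
  | succ n ih =>
    rw [Nat.cast_succ]
    exact w.map_le_add ih w.map_one.ge

theorem map_pow_eq_coe {x : K} {c : ℤ} (hx : w x = c) (n : ℕ) :
    w (x ^ n) = ((n * c : ℤ) : WithTop ℤ) := by
  rw [w.map_pow, hx, ← WithTop.coe_nsmul, nsmul_eq_mul]

theorem le_map_pow {x : K} {c : ℤ} (hx : (c : WithTop ℤ) ≤ w x) (n : ℕ) :
    ((n * c : ℤ) : WithTop ℤ) ≤ w (x ^ n) := by
  rw [w.map_pow, ← nsmul_eq_mul, WithTop.coe_nsmul]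
  exact nsmul_le_nsmul_right hx n

theorem map_mul_eq_coe {x y : K} {a b : ℤ} (hx : w x = a) (hy : w y = b) :
    w (x * y) = ((a + b : ℤ) : WithTop ℤ) := by
  rw [w.map_mul, hx, hy, WithTop.coe_add]

/-- The Frobenius defect `((x + y) ^ p - x ^ p - y ^ p) / p` is bounded below by `p` times a common
lower bound for the valuations of `x` and `y`. -/
theorem exists_add_pow_prime_eq {p : ℕ} (hp : p.Prime) {x y : K} {c : ℤ}
    (hx : (c : WithTop ℤ) ≤ w x) (hy : (c : WithTop ℤ) ≤ w y) :
    ∃ d : K, (x + y) ^ p = x ^ p + y ^ p + p * d ∧ ((p * c : ℤ) : WithTop ℤ) ≤ w d := by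
  refine ⟨_, add_pow_prime_eq' hp x y, w.map_le_sum fun k hk => ?_⟩
  have hkp : k ≤ p := (Finset.mem_Ioo.mp hk).2.le
  have hsplit : ((p * c : ℤ) : WithTop ℤ) = ((k * c : ℤ) : WithTop ℤ) +
      (((p - k : ℕ) * c : ℤ) : WithTop ℤ) + 0 := by
    rw [add_zero, ← WithTop.coe_add, Nat.cast_sub hkp]
    congr 1
    ring
  rw [w.map_mul, w.map_mul, hsplit]
  exact add_le_add (add_le_add (w.le_map_pow hx k) (w.le_map_pow hy _)) (w.natCast_nonneg _)

/-- A root of `y ^ p - y = a` with `a` of negative valuation `p * n` has valuation `n`. -/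
theorem map_eq_of_map_pow_sub_self {p : ℕ} (hp : 1 < p) {y : K} {n : ℤ} (hn : n < 0)
    (h : w (y ^ p - y) = ((p * n : ℤ) : WithTop ℤ)) : w y = n := by
  have hp' : (1 : ℤ) < p := by exact_mod_cast hp
  have hlt : ¬ (0 : WithTop ℤ) ≤ w y := fun h0 => by
    have h1 : ((0 : ℤ) : WithTop ℤ) ≤ w (y ^ p - y) :=
      w.map_le_sub (by simpa using w.le_map_pow (c := 0) (by simpa using h0) p) h0
    rw [h, WithTop.coe_le_coe] at h1
    nlinarith
  obtain ⟨k, hk⟩ := WithTop.ne_top_iff_exists.mp (fun h0 : w y = ⊤ => hlt (h0 ▸ le_top))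
  rw [← hk] at hlt
  have hk0 : k < 0 := by exact_mod_cast not_le.mp hlt
  have hpow := w.map_pow_eq_coe hk.symm p
  have hsub : w (y ^ p - y) = w (y ^ p) := by
    refine w.map_sub_eq_of_lt_left ?_
    rw [hpow, ← hk, WithTop.coe_lt_coe]
    nlinarith
  rw [hsub, hpow, WithTop.coe_inj] at h
  rw [← hk, mul_left_cancel₀ (by positivity) h]

end AddValuation

/-- `y₂ = x₂ − μ·x₁` has valuation `v₂(y₂) = −b₂`. -/
theorem statement8
    (p : ℕ) (hp : p.Prime)
    (K0 K2 : Type*) [Field K0] [Field K2] [CharZero K0] [CharZero K2]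
    [Algebra K0 K2] [IsGalois K0 K2] [FiniteDimensional K0 K2]
    (hdeg : Module.finrank K0 K2 = p ^ 2)
    (hcyc : IsCyclic (K2 ≃ₐ[K0] K2))
    (v0 : K0 → ℤ) (v2 : K2 → ℤ)
    (hv0 : IsDiscVal v0) (hv2 : IsDiscVal v2)
    (e0 : ℤ) (he0 : e0 = v0 (p : K0)) (he0pos : 1 ≤ e0)
    (hram : ∀ x : K0, x ≠ 0 → v2 (algebraMap K0 K2 x) = (p : ℤ) ^ 2 * v0 x)
    (a1 μ a2 : K0) (ha1 : a1 ≠ 0) (hμ0 : μ ≠ 0)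
    (hwitt : ∀ y : K0, y ^ p - y ≠ a1)
    (hnd : ¬ ((p : ℤ) ∣ v0 a1))
    (hneg : v0 a1 < 0)
    (hbd : -((p : ℤ) * e0) < ((p : ℤ) ^ 2 - 1) * v0 a1)
    (m : ℤ) (hm : m = -v0 μ) (hmpos : 0 < m)
    (hmu1 : (p : ℤ) ^ 2 * (p - 1) * m - (2 * p * (p - 1) + 1) * v0 a1 < (p : ℤ) ^ 2 * e0)
    (hmu2 : -(((p : ℤ) ^ 2 - 1) * v0 a1) < (p : ℤ) ^ 2 * m)
    (ha2 : a2 = μ ^ p * a1)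
    (x1 x2 : K2)
    (hx1 : x1 ^ p - x1 = algebraMap K0 K2 a1)
    (hx2 : x2 ^ p - x2 = algebraMap K0 K2 a2 +
      (x1 ^ p + (algebraMap K0 K2 a1) ^ p - (x1 + algebraMap K0 K2 a1) ^ p) / (p : K2))
    (hgen : Algebra.adjoin K0 {x1, x2} = ⊤)
    (b1 b2 : ℤ) (hb1 : b1 = -v0 a1) (hb2 : b2 = (p : ℤ) ^ 2 * m + b1) :
    x2 - algebraMap K0 K2 μ * x1 ≠ 0 ∧
    v2 (x2 - algebraMap K0 K2 μ * x1) = -b2 := by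
  have hp2 : (2 : ℤ) ≤ p := by exact_mod_cast hp.two_le
  have hpK : (p : K2) ≠ 0 := by exact_mod_cast hp.ne_zero
  have hpK0 : (p : K0) ≠ 0 := by exact_mod_cast hp.ne_zero
  have hA : v0 a1 = -b1 := by omega
  have hb1pos : 0 < b1 := by omega
  have hμ : v0 μ = -m := by omega
  rw [hA] at hbd hmu2
  set w := hv2.toAddValuation
  set a := algebraMap K0 K2 a1 with ha
  set ν := algebraMap K0 K2 μ with hν
  have ha0 : a ≠ 0 := by simpa [ha] using ha1
  have hν0 : ν ≠ 0 := by simpa [hν] using hμ0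
  have hwa : w a = ((-(p ^ 2 * b1) : ℤ) : WithTop ℤ) := by
    rw [hv2.toAddValuation_apply ha0, hram a1 ha1, hA, mul_neg]
  have hwν : w ν = ((-(p ^ 2 * m) : ℤ) : WithTop ℤ) := by
    rw [hv2.toAddValuation_apply hν0, hram μ hμ0, hμ, mul_neg]
  have hwp : w (p : K2) = ((p ^ 2 * e0 : ℤ) : WithTop ℤ) := by
    rw [hv2.toAddValuation_apply hpK, he0, ← hram _ hpK0, map_natCast]
  have hwx1 : w x1 = ((-(p * b1) : ℤ) : WithTop ℤ) := by
    refine w.map_eq_of_map_pow_sub_self hp.one_lt (by nlinarith) ?_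
    rw [hx1, hwa]
    congr 1
    ring
  -- The Witt vector correction term is `-d`, of valuation at least `-(p ^ 3 * b1)`.
  obtain ⟨d, hd, hwd⟩ := w.exists_add_pow_prime_eq hp (x := x1) (y := a) (c := -(p ^ 2 * b1))
    (by rw [hwx1, WithTop.coe_le_coe]; nlinarith [mul_pos (by omega : (0 : ℤ) < p) hb1pos])
    hwa.ge
  have hD : (x1 ^ p + a ^ p - (x1 + a) ^ p) / (p : K2) = -d := by
    rw [hd]
    field_simp
    ring
  have ha2' : algebraMap K0 K2 a2 = ν ^ p * a := by rw [ha2, map_mul, map_pow]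
  rw [hD, ha2'] at hx2
  have hmu3 : (p : ℤ) ^ 3 * b1 < p ^ 3 * m + p * b1 := by nlinarith
  have hpb : (p : ℤ) * b1 < p ^ 2 * b1 := by nlinarith [mul_pos (by omega : (0 : ℤ) < p) hb1pos]
  have hwνx1 : w (ν * x1) = ((-(p ^ 2 * m) + -(p * b1) : ℤ) : WithTop ℤ) :=
    w.map_mul_eq_coe hwν hwx1
  have hwx2 : w x2 = ((-(p ^ 2 * m) + -(p * b1) : ℤ) : WithTop ℤ) := by
    refine w.map_eq_of_map_pow_sub_self hp.one_lt (by nlinarith) ?_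
    have hmain := w.map_mul_eq_coe (w.map_pow_eq_coe hwν p) hwa
    rw [hx2, w.map_add_eq_of_lt_left, hmain]
    · congr 1
      ring
    · rw [hmain, w.map_neg]
      refine lt_of_lt_of_le (WithTop.coe_lt_coe.mpr ?_) hwd
      linarith
  set y := x2 - ν * x1 with hy
  obtain ⟨c, hc, hwc⟩ := w.exists_add_pow_prime_eq hp (x := y) (y := ν * x1)
    (w.map_le_sub hwx2.ge hwνx1.ge) hwνx1.ge
  have hxy : y + ν * x1 = x2 := by rw [hy]; ring
  have hyeq : y ^ p - y = -(ν ^ p * x1) + (-d + ν * x1 + -(p * c)) := by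
    rw [hxy, mul_pow] at hc
    linear_combination hx2 - hc - ν ^ p * hx1 + hxy
  have hlead := w.map_mul_eq_coe (w.map_pow_eq_coe hwν p) hwx1
  have hpos : (0 : ℤ) < p ^ 2 * m := by positivity
  have hwy : w y = ((-b2 : ℤ) : WithTop ℤ) := by
    refine w.map_eq_of_map_pow_sub_self hp.one_lt (by linarith) ?_
    rw [hyeq, w.map_add_eq_of_lt_left, w.map_neg, hlead]
    · congr 1
      rw [hb2]
      ring
    · rw [w.map_neg, hlead]
      refine w.map_lt_add (w.map_lt_add ?_ ?_) ?_
      · rw [w.map_neg]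
        refine lt_of_lt_of_le (WithTop.coe_lt_coe.mpr ?_) hwd
        linarith
      · rw [hwνx1, WithTop.coe_lt_coe]
        nlinarith
      · rw [w.map_neg, w.map_mul, hwp]
        refine lt_of_lt_of_le ?_ (add_le_add le_rfl hwc)
        rw [← WithTop.coe_add, WithTop.coe_lt_coe]
        nlinarith [mul_pos (by omega : (0 : ℤ) < p) hb1pos]
  have hy0 : y ≠ 0 := fun h => WithTop.top_ne_coe (by rwa [h, w.map_zero] at hwy)
  refine ⟨hy0, ?_⟩
  rw [hv2.toAddValuation_apply hy0] at hwy
  exact_mod_cast hwy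
end
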